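/- Let n ≥ 2 and suppose the growth function is f(k) = n^k. Then for every d ≥ 1 and μ ≥ 0, the cardinality of the nested Smolyak grid is N(d,μ) = n^d · Σ_{k=0}^{min(d−1,μ)} C(d−1,k) · (−1)^k · C(d+μ−k−1, μ−k) · n^{μ−k} (an identity in ℤ). -/

import Mathlib

/-- Multi-indices `i : Fin d → ℕ` with `i k ≥ 1` for all `k` and `∑ k, i k = d + μ`. -/
def smolyakIndices (d μ : ℕ) : Finset (Fin d → ℕ) :=
  (Fintype.piFinset fun _ => Finset.Icc 1 (d + μ)).filter fun i => ∑ k, i k = d + μ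

/-- The Smolyak grid `Γ(d, μ)` based on the node sets `S`. -/
noncomputable def smolyakGrid (S : ℕ → Finset ℝ) (d μ : ℕ) : Finset (Fin d → ℝ) :=
  (smolyakIndices d μ).biUnion fun i => Fintype.piFinset fun k => S (i k)

/-- `N(d, μ)`: the number of nodes in the Smolyak grid. -/
noncomputable def smolyakCard (S : ℕ → Finset ℝ) (d μ : ℕ) : ℕ :=
  (smolyakGrid S d μ).card

/-!
Put `T j = S (j + 1)` and let `T' j = T j \ (T 0 ∪ ⋯ ∪ T (j - 1))` be the nodes that are new at
level `j`. As the node sets are nested, the condition `∑ k, i k = d + μ` can be relaxed to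
`∑ k, i k ≤ d + μ`, so `Γ(d, μ)` is the disjoint union of the boxes `∏ₖ T' (j k)` over the vectors
`j` with `∑ k, j k ≤ μ`. On generating functions the bound on the sum is a division by `1 - X`, and
the passage from `T` to `T'` multiplies each of the `d` factors by `1 - X`. Hence, for every growth
function `f`, `∑_μ N(d, μ) X^μ = (1 - X)^(d - 1) (∑_j f(j + 1) X^j)^d`, and for `f(k) = n^k` the
inner series is `n / (1 - n X)`.
-/

open Finset hiding mk
open PowerSeries

section Boxes

variable {ι κ α : Type*} [Fintype ι] [DecidableEq ι]

theorem pairwise_disjoint_piFinset {t : κ → Finset α} (ht : Pairwise (Function.onFun Disjoint t)) :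
    Pairwise (Function.onFun Disjoint fun j : ι → κ => Fintype.piFinset fun k => t (j k)) := by
  intro i j hij
  obtain ⟨k, hk⟩ := Function.ne_iff.mp hij
  exact Fintype.piFinset_disjoint_of_disjoint _ _ (ht hk)

variable [DecidableEq α] [PartialOrder κ] [LocallyFiniteOrderBot κ]

theorem exists_le_mem_disjointed {t : κ → Finset α} {m : κ} {x : α} (hx : x ∈ t m) :
    ∃ j ≤ m, x ∈ disjointed t j := by
  have hx' : x ∈ partialSups (disjointed t) m := by
    rw [partialSups_disjointed]
    exact le_partialSups t m hx
  rw [partialSups_apply, sup'_eq_sup, mem_sup] at hx'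
  simpa only [mem_Iic] using hx'

theorem biUnion_piFinset_disjointed (t : κ → Finset α) {J : Finset (ι → κ)}
    (hJ : IsLowerSet (J : Set (ι → κ))) :
    (J.biUnion fun j => Fintype.piFinset fun k => disjointed t (j k)) =
      J.biUnion fun j => Fintype.piFinset fun k => t (j k) := by
  ext x
  simp only [mem_biUnion, Fintype.mem_piFinset]
  constructor
  · rintro ⟨j, hj, hx⟩
    exact ⟨j, hj, fun k => disjointed_le t (j k) (hx k)⟩
  · rintro ⟨j, hj, hx⟩
    choose i hij hxi using fun k => exists_le_mem_disjointed (hx k)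
    exact ⟨i, hJ hij hj, hxi⟩

theorem card_biUnion_piFinset_of_isLowerSet {κ : Type*} [LinearOrder κ] [LocallyFiniteOrderBot κ]
    (t : κ → Finset α) {J : Finset (ι → κ)} (hJ : IsLowerSet (J : Set (ι → κ))) :
    #(J.biUnion fun j => Fintype.piFinset fun k => t (j k)) =
      ∑ j ∈ J, ∏ k, #(disjointed t (j k)) := by
  rw [← biUnion_piFinset_disjointed t hJ,
    card_biUnion fun _ _ _ _ hij => pairwise_disjoint_piFinset (disjoint_disjointed t) hij]
  simp only [Fintype.card_piFinset]

end Boxes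

section TotalDegree

variable {ι : Type*} [Fintype ι] [DecidableEq ι]

variable (ι) in
/-- The exponent vectors `j : ι → ℕ` of total degree at most `m`, as the union of the layers
`∑ k, j k = l` for `l ≤ m`; the boxes of these indices make up the Smolyak grid. -/
def totalDegreeLE (m : ℕ) : Finset (ι → ℕ) :=
  (range (m + 1)).biUnion (piAntidiag univ)

@[simp]
theorem mem_totalDegreeLE {m : ℕ} {j : ι → ℕ} : j ∈ totalDegreeLE ι m ↔ ∑ k, j k ≤ m := by
  simp [totalDegreeLE]

theorem isLowerSet_totalDegreeLE (m : ℕ) : IsLowerSet (totalDegreeLE ι m : Set (ι → ℕ)) := by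
  intro i j hji hi
  simp only [mem_coe, mem_totalDegreeLE] at hi ⊢
  exact (sum_le_sum fun k _ => hji k).trans hi

theorem sum_totalDegreeLE {M : Type*} [AddCommMonoid M] (m : ℕ) (g : (ι → ℕ) → M) :
    ∑ j ∈ totalDegreeLE ι m, g j = ∑ l ∈ range (m + 1), ∑ j ∈ piAntidiag univ l, g j := by
  refine sum_biUnion fun l _ l' _ hl => disjoint_left.mpr fun j hj hj' => hl ?_
  exact (mem_piAntidiag.mp hj).1.symm.trans (mem_piAntidiag.mp hj').1

end TotalDegree

section PowerSeries

theorem coeff_mk_one_mul {R : Type*} [Semiring R] (φ : R⟦X⟧) (m : ℕ) :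
    coeff m (mk 1 * φ) = ∑ l ∈ range (m + 1), coeff l φ := by
  rw [coeff_mul, Nat.sum_antidiagonal_eq_sum_range_succ_mk, ← sum_range_reflect]
  refine sum_congr rfl fun l hl => ?_
  simp [Nat.sub_sub_self (Nat.lt_succ_iff.mp (mem_range.mp hl))]

section CommSemiring

variable {R ι : Type*} [CommSemiring R] [Fintype ι] [DecidableEq ι]

theorem coeff_prod_univ (f : ι → R⟦X⟧) (m : ℕ) :
    coeff m (∏ i, f i) = ∑ j ∈ piAntidiag univ m, ∏ i, coeff (j i) (f i) := by
  rw [coeff_prod]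
  exact sum_equiv Finsupp.equivFunOnFinite (by simp) (by simp)

theorem sum_totalDegreeLE_prod_coeff (f : ι → R⟦X⟧) (m : ℕ) :
    ∑ j ∈ totalDegreeLE ι m, ∏ i, coeff (j i) (f i) = coeff m (mk 1 * ∏ i, f i) := by
  simp only [sum_totalDegreeLE, coeff_mk_one_mul, coeff_prod_univ]

end CommSemiring

variable {R : Type*} [CommRing R]

theorem mk_pow_pow_eq_mk_choose_mul_pow (a : R) (e : ℕ) :
    (mk fun j => a ^ j) ^ (e + 1) = mk fun j => ((e + j).choose e : R) * a ^ j := by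
  have hrescale : (mk fun j => a ^ j) = rescale a (mk 1) := by
    simp [rescale_mk]
  rw [hrescale, ← map_pow, mk_one_pow_eq_mk_choose_add, rescale_mk]
  simp only [mul_comm]

theorem coeff_one_sub_X_pow (e k : ℕ) :
    coeff k ((1 - X : R⟦X⟧) ^ e) = (-1) ^ k * (e.choose k : R) := by
  have hrescale : (1 - X : R⟦X⟧) ^ e =
      rescale (-1) (((1 + Polynomial.X) ^ e : Polynomial R) : R⟦X⟧) := by
    simp [rescale_X, sub_eq_add_neg]
  rw [hrescale, coeff_rescale, Polynomial.coeff_coe, Polynomial.coeff_one_add_X_pow]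

theorem coeff_one_sub_X_pow_mul_mk_pow_pow (a : R) (e m : ℕ) :
    coeff m ((1 - X) ^ e * (mk fun j => a ^ j) ^ (e + 1)) =
      ∑ k ∈ range (min e m + 1),
        (e.choose k : R) * (-1) ^ k * ((e + (m - k)).choose (m - k) : R) * a ^ (m - k) := by
  have hzero : ∀ k ∈ range (m + 1), k ∉ range (min e m + 1) →
      (e.choose k : R) * (-1) ^ k * ((e + (m - k)).choose (m - k) : R) * a ^ (m - k) = 0 := by
    intro k hk hk'
    have hek : e < k := by simp only [mem_range] at hk hk'; omega
    simp [Nat.choose_eq_zero_of_lt hek]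
  rw [sum_subset (range_subset_range.mpr (by omega)) hzero,
    mk_pow_pow_eq_mk_choose_mul_pow, coeff_mul, Nat.sum_antidiagonal_eq_sum_range_succ_mk]
  refine sum_congr rfl fun k _ => ?_
  rw [coeff_one_sub_X_pow, coeff_mk, Nat.choose_symm_add]
  ring

theorem mk_card_disjointed {α : Type*} [DecidableEq α] {t : ℕ → Finset α} (ht : Monotone t) :
    (mk fun j => (#(disjointed t j) : R)) = (1 - X) * mk fun j => (#(t j) : R) := by
  ext (_ | j)
  · simp [sub_mul, disjointed_zero]
  · have hcard : #(disjointed t (j + 1)) + #(t j) = #(t (j + 1)) := by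
      rw [disjointed_add_one, ht.partialSups_eq]
      exact card_sdiff_add_card_eq_card (ht j.le_succ)
    simp [sub_mul, coeff_succ_X_mul, ← hcard]

end PowerSeries

section SmolyakGrid

theorem mem_smolyakIndices {d μ : ℕ} {i : Fin d → ℕ} :
    i ∈ smolyakIndices d μ ↔ (∀ k, 1 ≤ i k) ∧ ∑ k, i k = d + μ := by
  simp only [smolyakIndices, mem_filter, Fintype.mem_piFinset, mem_Icc]
  refine and_congr_left fun hsum => forall_congr' fun k => and_iff_left ?_
  exact hsum ▸ single_le_sum (fun _ _ => Nat.zero_le _) (mem_univ k)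

variable {S : ℕ → Finset ℝ}

theorem smolyakGrid_eq_biUnion_totalDegreeLE (hS : Monotone fun j => S (j + 1))
    {d : ℕ} (hd : 0 < d) (μ : ℕ) :
    smolyakGrid S d μ =
      (totalDegreeLE (Fin d) μ).biUnion fun j => Fintype.piFinset fun k => S (j k + 1) := by
  ext x
  simp only [smolyakGrid, mem_biUnion, mem_smolyakIndices, mem_totalDegreeLE, Fintype.mem_piFinset]
  constructor
  · rintro ⟨i, ⟨hi, hsum⟩, hx⟩
    have hpred : ∀ k, i k - 1 + 1 = i k := fun k => Nat.sub_add_cancel (hi k)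
    refine ⟨fun k => i k - 1, ?_, fun k => by simpa only [hpred] using hx k⟩
    have hsum' : ∑ k, (i k - 1 + 1) = d + μ := by simpa only [hpred] using hsum
    rw [sum_add_distrib, Fin.sum_const, smul_eq_mul, mul_one] at hsum'
    change ∑ k, (i k - 1) ≤ μ
    omega
  · rintro ⟨j, hj, hx⟩
    let slack : Fin d → ℕ := Pi.single ⟨0, hd⟩ (μ - ∑ k, j k)
    refine ⟨fun k => j k + slack k + 1, ⟨fun k => Nat.succ_pos _, ?_⟩,
      fun k => hS (Nat.le_add_right _ _) (hx k)⟩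
    have hslack : ∑ k, slack k = μ - ∑ k, j k := Fintype.sum_pi_single' _ _
    rw [sum_add_distrib, sum_add_distrib, hslack, Fin.sum_const, smul_eq_mul, mul_one]
    omega

theorem smolyakCard_eq_sum_totalDegreeLE (hS : Monotone fun j => S (j + 1))
    {d : ℕ} (hd : 0 < d) (μ : ℕ) :
    smolyakCard S d μ =
      ∑ j ∈ totalDegreeLE (Fin d) μ, ∏ k, #(disjointed (fun l => S (l + 1)) (j k)) := by
  rw [smolyakCard, smolyakGrid_eq_biUnion_totalDegreeLE hS hd,
    card_biUnion_piFinset_of_isLowerSet (fun l => S (l + 1)) (isLowerSet_totalDegreeLE μ)]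

theorem mk_smolyakCard {R : Type*} [CommRing R] (hS : Monotone fun j => S (j + 1)) (e : ℕ) :
    (mk fun μ => (smolyakCard S (e + 1) μ : R)) =
      (1 - X) ^ e * (mk fun j => (#(S (j + 1)) : R)) ^ (e + 1) := by
  have hcoeff : (mk fun μ => (smolyakCard S (e + 1) μ : R)) =
      mk 1 * (mk fun j => (#(disjointed (fun l => S (l + 1)) j) : R)) ^ (e + 1) := by
    ext μ
    have hsum := sum_totalDegreeLE_prod_coeff
      (fun _ : Fin (e + 1) => mk fun j => (#(disjointed (fun l => S (l + 1)) j) : R)) μ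
    simp only [coeff_mk, prod_const, card_univ, Fintype.card_fin] at hsum
    simp only [coeff_mk, smolyakCard_eq_sum_totalDegreeLE hS e.succ_pos, Nat.cast_sum,
      Nat.cast_prod, hsum]
  rw [hcoeff, mk_card_disjointed hS, mul_pow, pow_succ' (1 - X), mul_assoc, ← mul_assoc (mk 1),
    mk_one_mul_one_sub_eq_one, one_mul]

end SmolyakGrid

/-- For the growth function `f(k) = nᵏ` (with `n ≥ 2`), the nested Smolyak grid has
`N(d, μ) = n^d · ∑_{k=0}^{min(d-1, μ)} C(d-1, k) (-1)ᵏ C(d+μ-k-1, μ-k) n^(μ-k)` nodes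
(an identity in `ℤ`). -/
theorem smolyakCard_of_pow
    (n : ℕ) (hn : 2 ≤ n)
    (S : ℕ → Finset ℝ) (hS_nested : ∀ k, 1 ≤ k → S k ⊆ S (k + 1))
    (hS_card : ∀ k, 1 ≤ k → (S k).card = n ^ k)
    (d μ : ℕ) (hd : 1 ≤ d) :
    (smolyakCard S d μ : ℤ) =
      (n : ℤ) ^ d * ∑ k ∈ Finset.range (min (d - 1) μ + 1),
        ((d - 1).choose k : ℤ) * (-1) ^ k * ((d + μ - k - 1).choose (μ - k) : ℤ) *
          (n : ℤ) ^ (μ - k) := by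
  obtain ⟨e, rfl⟩ := Nat.exists_eq_add_of_le' hd
  have hmono : Monotone fun j => S (j + 1) :=
    monotone_nat_of_le_succ fun j => hS_nested (j + 1) j.succ_pos
  have hseries : (mk fun j => (#(S (j + 1)) : ℤ)) = C (n : ℤ) * mk fun j => (n : ℤ) ^ j := by
    ext j
    rw [coeff_mk, coeff_C_mul, coeff_mk, hS_card (j + 1) j.succ_pos, Nat.cast_pow, pow_succ']
  have hcoeff : (smolyakCard S (e + 1) μ : ℤ) = (n : ℤ) ^ (e + 1) *
      coeff μ ((1 - X) ^ e * (mk fun j => (n : ℤ) ^ j) ^ (e + 1)) := by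
    rw [← coeff_mk μ fun μ => (smolyakCard S (e + 1) μ : ℤ), mk_smolyakCard hmono, hseries,
      mul_pow, mul_left_comm, ← map_pow, coeff_C_mul]
  rw [hcoeff, coeff_one_sub_X_pow_mul_mk_pow_pow, Nat.add_sub_cancel]
  congr 1
  refine sum_congr rfl fun k hk => ?_
  have hk' : k ≤ μ := by simp only [mem_range] at hk; omega
  rw [show e + 1 + μ - k - 1 = e + (μ - k) by omega]
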